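/- arXiv:2109.06369 — 3 statements merged into one kernel-verified Lean document; each statement's English description precedes it below -/
import Mathlib

section
/- Let T = (t_{ij}) be a positive m×n real matrix and X = X_Γ(T). Then for all i ∈ [m] and j ∈ [n], t_{ij} = det X[{i⋯},{j⋯}] / det X[{i+1⋯},{j+1⋯}] (with the convention that the determinant of an empty submatrix is 1). -/
/-!
Every maximal contiguous minor of `X = X_Γ(T)` is a product along a diagonal of `T`:
`det X[{i⋯},{j⋯}] = ∏ₛ t_{i+s, j+s}` (`contigMinorTL_XGamma`). The quotient of two
consecutive such products is `t_{ij}`.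

The diagonal product formula is proved by letting the rows of `T` enter one at a time. Let
`X_M` be the Γ-path-sum matrix in which only turns in the first `M` rows are allowed
(`truncSum`). A path that uses the new row `M` has its last turn there, so removing that turn
gives, for `i < M`,
`X_{M+1}(i,j) = ∑_{j' ≥ j} X_M(i,j') · t_{Mj} / t_{Mj'}` (`truncSum_succ`),
whereas row `M` of `X_{M+1}` is the row of `T` (`truncSum_self`). Consequently
`X_{M+1}(i,j) - (t_{Mj} / t_{M,j+1}) X_{M+1}(i,j+1)` is `X_M(i,j)` for `i < M` and `0` for
`i = M`. These column operations evaluate a contiguous minor by induction on `M`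
(`det_corner`): if the minor contains the last row, that row becomes `(0,…,0,t_{Mc})`, and
expanding along it leaves a minor of `X_M`; if not, the minor reaches the last column, and it
equals the same minor of `X_M`.
-/

open Finset

/-- A real matrix is totally positive if every minor (determinant of a square submatrix
obtained by selecting rows and columns in increasing order) is positive. -/
def TotallyPositive {m n : ℕ} (A : Matrix (Fin m) (Fin n) ℝ) : Prop :=
  ∀ (r : ℕ) (f : Fin r → Fin m) (g : Fin r → Fin n),
    StrictMono f → StrictMono g → 0 < (A.submatrix f g).det

/-- A matrix is (strongly) positive if all of its entries are positive. -/
def EntrywisePos {m n : ℕ} (A : Matrix (Fin m) (Fin n) ℝ) : Prop :=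
  ∀ i j, 0 < A i j

/-- The weight of the Γ-path encoded by the pair of finsets `(I, J)`.
A Γ-path with Γ-turns `(i₁,j₁), …, (i_p,j_p)`, where `i₁ < i₂ < ⋯ < i_p` and
`j₁ > j₂ > ⋯ > j_p`, corresponds to the pair `I = {i₁,…,i_p}`, `J = {j₁,…,j_p}`;
the path runs from row vertex `i₁ = min I` to column vertex `j_p = min J`.
Its weight is `t_{i₁j₁} · ∏_{s=1}^{p−1} t_{i_{s+1} j_s}⁻¹ · t_{i_{s+1} j_{s+1}}`. -/
noncomputable def gammaWeight {m n : ℕ} (T : Matrix (Fin m) (Fin n) ℝ)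
    (I : Finset (Fin m)) (J : Finset (Fin n)) : ℝ :=
  if h : I.Nonempty ∧ J.Nonempty ∧ I.card = J.card then
    let p := I.card
    let row : ℕ → Fin m := fun s => (I.sort (· ≤ ·)).getD s (I.min' h.1)
    let col : ℕ → Fin n := fun s => (J.sort (· ≤ ·)).getD (p - 1 - s) (J.min' h.2.1)
    T (row 0) (col 0) *
      ∏ s ∈ Finset.range (p - 1),
        ((T (row (s + 1)) (col s))⁻¹ * T (row (s + 1)) (col (s + 1)))
  else 0

/-- The Γ-path-sum matrix `X_Γ(T)`: its `(i,j)` entry is the sum of the weights of all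
Γ-paths from row vertex `i` to column vertex `j`. -/
noncomputable def XGamma {m n : ℕ} (T : Matrix (Fin m) (Fin n) ℝ) :
    Matrix (Fin m) (Fin n) ℝ :=
  Matrix.of fun i j =>
    ∑ I ∈ Finset.univ.filter (fun I : Finset (Fin m) => I.min = (i : WithTop (Fin m))),
      ∑ J ∈ Finset.univ.filter (fun J : Finset (Fin n) =>
          J.min = (j : WithTop (Fin n)) ∧ J.card = I.card),
        gammaWeight T I J

/-- The weight of the L-path encoded by the pair of finsets `(I, J)`.
An L-path with turns `(i₁,j₁), …, (i_p,j_p)`, where `i₁ > i₂ > ⋯ > i_p` and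
`j₁ < j₂ < ⋯ < j_p`, corresponds to `I = {i₁,…,i_p}`, `J = {j₁,…,j_p}`;
the path runs from row vertex `i₁ = max I` to column vertex `j_p = max J`. -/
noncomputable def lWeight {m n : ℕ} (T : Matrix (Fin m) (Fin n) ℝ)
    (I : Finset (Fin m)) (J : Finset (Fin n)) : ℝ :=
  if h : I.Nonempty ∧ J.Nonempty ∧ I.card = J.card then
    let p := I.card
    let row : ℕ → Fin m := fun s => (I.sort (· ≤ ·)).getD (p - 1 - s) (I.min' h.1)
    let col : ℕ → Fin n := fun s => (J.sort (· ≤ ·)).getD s (J.min' h.2.1)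
    T (row 0) (col 0) *
      ∏ s ∈ Finset.range (p - 1),
        ((T (row (s + 1)) (col s))⁻¹ * T (row (s + 1)) (col (s + 1)))
  else 0

/-- The L-path-sum matrix `X_L(T)`. -/
noncomputable def XL {m n : ℕ} (T : Matrix (Fin m) (Fin n) ℝ) :
    Matrix (Fin m) (Fin n) ℝ :=
  Matrix.of fun i j =>
    ∑ I ∈ Finset.univ.filter (fun I : Finset (Fin m) => I.max = (i : WithBot (Fin m))),
      ∑ J ∈ Finset.univ.filter (fun J : Finset (Fin n) =>
          J.max = (j : WithBot (Fin n)) ∧ J.card = I.card),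
        lWeight T I J

/-- The set of internal vertices traversed by the Γ-path encoded by `(I, J)`:
horizontal segments `{(i_s, b) : j_s ≤ b ≤ j_{s-1}}` (with `j₀` interpreted as the last
column) and vertical segments `{(a, j_s) : i_s ≤ a ≤ i_{s+1}}` (with `i_{p+1}` interpreted
as the last row). -/
def pathVerts {m n : ℕ} (I : Finset (Fin m)) (J : Finset (Fin n)) :
    Finset (Fin m × Fin n) :=
  Finset.univ.filter fun v =>
    (∃ s ∈ Finset.range I.card,
        v.1 = (I.sort (· ≤ ·)).getD s v.1 ∧
        (J.sort (· ≤ ·)).getD (J.card - 1 - s) v.2 ≤ v.2 ∧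
        (s = 0 ∨ v.2 ≤ (J.sort (· ≤ ·)).getD (J.card - s) v.2)) ∨
    (∃ s ∈ Finset.range I.card,
        v.2 = (J.sort (· ≤ ·)).getD (J.card - 1 - s) v.2 ∧
        (I.sort (· ≤ ·)).getD s v.1 ≤ v.1 ∧
        (s + 1 = I.card ∨ v.1 ≤ (I.sort (· ≤ ·)).getD (s + 1) v.1))

/-- The sequence of matrices produced by Cauchon's Algorithm: `cauchonSeq X t` is the
matrix obtained after performing the first `t` steps, the steps being indexed by the
positions `(i,j) ∈ [m]×[n]` (1-based) in increasing reverse lexicographic order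
(`(m,n)` first); the step at 1-based position `(i,j)` is performed on `cauchonSeq X t`
with `t = (m−i)·n + (n−j)`, so that the matrix `X^{(i,j)}` of Cauchon's Algorithm is
`cauchonSeq X ((m−i)·n + (n−j))`. -/
noncomputable def cauchonSeq {m n : ℕ} (X : Matrix (Fin m) (Fin n) ℝ) :
    ℕ → Matrix (Fin m) (Fin n) ℝ
  | 0 => X
  | t + 1 =>
    let Y := cauchonSeq X t
    Matrix.of fun k l =>
      let i0 : Fin m := ⟨m - 1 - t / n,
        lt_of_le_of_lt (Nat.sub_le _ _) (by have := k.isLt; omega)⟩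
      let j0 : Fin n := ⟨n - 1 - t % n,
        lt_of_le_of_lt (Nat.sub_le _ _) (by have := l.isLt; omega)⟩
      if (k : ℕ) < (i0 : ℕ) ∧ (l : ℕ) < (j0 : ℕ) then
        Y k l - Y k j0 * (Y i0 j0)⁻¹ * Y i0 l
      else Y k l

/-- The output `T = X^{(1,1)}` of Cauchon's Algorithm. -/
noncomputable def cauchonOutput {m n : ℕ} (X : Matrix (Fin m) (Fin n) ℝ) :
    Matrix (Fin m) (Fin n) ℝ :=
  cauchonSeq X ((m - 1) * n + (n - 1))

/-- `contigMinorTL A i j` (1-based `i`, `j`) is the minor `det A[{i⋯},{j⋯}]` of the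
largest contiguous submatrix of `A` with top-left corner `(i,j)`, i.e. with rows
`i, …, i+k` and columns `j, …, j+k` where `k = min(M−i, N−j)`; it is `1` (the empty
determinant) if `(i,j)` is out of range. -/
noncomputable def contigMinorTL {M N : ℕ} (A : Matrix (Fin M) (Fin N) ℝ) (i j : ℕ) : ℝ :=
  if h : 1 ≤ i ∧ i ≤ M ∧ 1 ≤ j ∧ j ≤ N then
    (A.submatrix
      (fun s : Fin (min (M - i) (N - j) + 1) =>
        (⟨i - 1 + (s : ℕ), by have := s.isLt; omega⟩ : Fin M))
      (fun s : Fin (min (M - i) (N - j) + 1) =>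
        (⟨j - 1 + (s : ℕ), by have := s.isLt; omega⟩ : Fin N))).det
  else 1

/-- `borderMinorTL A i₀ j₀ i j` (1-based indices, `i₀ < i`, `j₀ < j`) is the minor
`det A[{i₀, i⋯},{j₀, j⋯}]` with rows `{i₀} ∪ {i, …, i+k}` and columns
`{j₀} ∪ {j, …, j+k}` where `k = min(M−i, N−j)`; when the contiguous part is out of range
(`i > M` or `j > N`) it is the single entry `A[{i₀},{j₀}]`, and it is `1` if `(i₀,j₀)`
is out of range. -/
noncomputable def borderMinorTL {M N : ℕ} (A : Matrix (Fin M) (Fin N) ℝ)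
    (i₀ j₀ i j : ℕ) : ℝ :=
  if h : 1 ≤ i₀ ∧ i₀ ≤ M ∧ 1 ≤ j₀ ∧ j₀ ≤ N then
    if h2 : i₀ < i ∧ i ≤ M ∧ j₀ < j ∧ j ≤ N then
      (A.submatrix
        (fun s : Fin (min (M - i) (N - j) + 2) =>
          if (s : ℕ) = 0 then (⟨i₀ - 1, by omega⟩ : Fin M)
          else ⟨i - 1 + ((s : ℕ) - 1), by have := s.isLt; omega⟩)
        (fun s : Fin (min (M - i) (N - j) + 2) =>
          if (s : ℕ) = 0 then (⟨j₀ - 1, by omega⟩ : Fin N)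
          else ⟨j - 1 + ((s : ℕ) - 1), by have := s.isLt; omega⟩)).det
    else A ⟨i₀ - 1, by omega⟩ ⟨j₀ - 1, by omega⟩
  else 1

/-- `borderMinorBR A i j i₀ j₀` (1-based indices, `i < i₀`, `j < j₀`) is the minor
`det A[{⋯i, i₀},{⋯j, j₀}]` with rows `{i−k, …, i} ∪ {i₀}` and columns
`{j−k, …, j} ∪ {j₀}` where `k = min(i−1, j−1)`; when the contiguous part is empty
(`i = 0` or `j = 0`) it is the single entry `A[{i₀},{j₀}]`, and it is `1` if `(i₀,j₀)`
is out of range. -/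
noncomputable def borderMinorBR {M N : ℕ} (A : Matrix (Fin M) (Fin N) ℝ)
    (i j i₀ j₀ : ℕ) : ℝ :=
  if h : 1 ≤ i₀ ∧ i₀ ≤ M ∧ 1 ≤ j₀ ∧ j₀ ≤ N then
    if h2 : 1 ≤ i ∧ i < i₀ ∧ 1 ≤ j ∧ j < j₀ then
      (A.submatrix
        (fun s : Fin (min (i - 1) (j - 1) + 2) =>
          if (s : ℕ) = min (i - 1) (j - 1) + 1 then (⟨i₀ - 1, by omega⟩ : Fin M)
          else ⟨i - 1 - min (i - 1) (j - 1) + (s : ℕ), by have := s.isLt; omega⟩)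
        (fun s : Fin (min (i - 1) (j - 1) + 2) =>
          if (s : ℕ) = min (i - 1) (j - 1) + 1 then (⟨j₀ - 1, by omega⟩ : Fin N)
          else ⟨j - 1 - min (i - 1) (j - 1) + (s : ℕ), by have := s.isLt; omega⟩)).det
    else A ⟨i₀ - 1, by omega⟩ ⟨j₀ - 1, by omega⟩
  else 1

/-! ### Removing the last turn of a Γ-path -/

lemma sort_insert_max {m : ℕ} (I : Finset (Fin m)) (a : Fin m) (h : ∀ x ∈ I, x < a) :
    (insert a I).sort (· ≤ ·) = I.sort (· ≤ ·) ++ [a] := by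
  have ha : a ∉ I := fun h' => lt_irrefl _ (h a h')
  apply List.Perm.eq_of_pairwise' (r := (· ≤ ·))
  · exact Finset.pairwise_sort _ _
  · rw [List.pairwise_append]
    refine ⟨Finset.pairwise_sort _ _, by simp, ?_⟩
    intro x hx y hy
    simp only [Finset.mem_sort] at hx
    simp only [List.mem_singleton] at hy
    exact hy ▸ (h x hx).le
  · rw [← Multiset.coe_eq_coe, Finset.sort_eq, Finset.insert_val_of_notMem ha,
      ← Multiset.coe_add, Finset.sort_eq, add_comm]
    rfl

/-- Appending a last turn `(a, b)` to a path that ends in column `c > b` multiplies its weight by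
`t_{ac}⁻¹ t_{ab}`. -/
lemma gammaWeight_insert {m n : ℕ} (T : Matrix (Fin m) (Fin n) ℝ)
    (I : Finset (Fin m)) (J : Finset (Fin n)) (a : Fin m) (b c : Fin n)
    (hI : I.Nonempty) (hc : J.min = (c : WithTop (Fin n))) (hIJ : J.card = I.card)
    (ha : ∀ x ∈ I, x < a) (hb : b < c) :
    gammaWeight T (insert a I) (insert b J) = gammaWeight T I J * ((T a c)⁻¹ * T a b) := by
  have hJ : J.Nonempty := ⟨c, Finset.mem_of_min hc⟩
  have hbJ : ∀ x ∈ J, b < x := fun x hx => hb.trans_le (Finset.min_le_of_eq hx hc)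
  have haI : a ∉ I := fun h' => lt_irrefl _ (ha a h')
  have hbnJ : b ∉ J := fun h' => lt_irrefl _ (hbJ b h')
  have hs1 := sort_insert_max I a ha
  have hs2 : (insert b J).sort (· ≤ ·) = b :: J.sort (· ≤ ·) :=
    Finset.sort_insert _ (fun x hx => (hbJ x hx).le) hbnJ
  obtain ⟨p, hp⟩ : ∃ p, I.card = p + 1 :=
    ⟨I.card - 1, by have := hI.card_pos; omega⟩
  have hlI : (I.sort (· ≤ ·)).length = p + 1 := by rw [Finset.length_sort, hp]
  have hlJ : (J.sort (· ≤ ·)).length = p + 1 := by rw [Finset.length_sort, hIJ, hp]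
  have hc0 : ∀ d, (J.sort (· ≤ ·)).getD 0 d = c := by
    intro d
    rw [List.getD_eq_getElem _ _ (by omega)]
    refine (Finset.sorted_zero_eq_min'_aux J (by omega) hJ).trans ?_
    exact (Finset.min'_eq_iff _ _ _).2
      ⟨Finset.mem_of_min hc, fun x hx => Finset.min_le_of_eq hx hc⟩
  have hrow : ∀ s d d', s < p + 1 →
      (I.sort (· ≤ ·) ++ [a]).getD s d = (I.sort (· ≤ ·)).getD s d' := by
    intro s d d' hs
    rw [List.getD_append _ _ _ _ (by omega), List.getD_eq_getElem _ _ (by omega),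
      List.getD_eq_getElem _ _ (by omega)]
  have hrowa : ∀ d, (I.sort (· ≤ ·) ++ [a]).getD (p + 1) d = a := by
    intro d
    rw [List.getD_append_right _ _ _ _ (by omega), hlI]
    simp
  have hcol : ∀ s d d', s < p + 1 →
      (b :: J.sort (· ≤ ·)).getD (p + 1 - s) d = (J.sort (· ≤ ·)).getD (p - s) d' := by
    intro s d d' hs
    rw [show p + 1 - s = (p - s) + 1 by omega, List.getD_cons_succ,
      List.getD_eq_getElem _ _ (by omega), List.getD_eq_getElem _ _ (by omega)]
  have h1 : (insert a I).Nonempty ∧ (insert b J).Nonempty ∧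
      (insert a I).card = (insert b J).card :=
    ⟨Finset.insert_nonempty _ _, Finset.insert_nonempty _ _, by
      rw [Finset.card_insert_of_notMem haI, Finset.card_insert_of_notMem hbnJ, hIJ]⟩
  have h2 : I.Nonempty ∧ J.Nonempty ∧ I.card = J.card := ⟨hI, hJ, hIJ.symm⟩
  unfold gammaWeight
  rw [dif_pos h1, dif_pos h2]
  simp only [hs1, hs2, Finset.card_insert_of_notMem haI, hp, Nat.add_sub_cancel]
  rw [Finset.prod_range_succ, ← mul_assoc]
  congr 1
  · rw [hrow 0 _ (I.min' hI) (by omega), hcol 0 _ (J.min' hJ) (by omega)]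
    congr 1
    apply Finset.prod_congr rfl
    intro s hs
    rw [Finset.mem_range] at hs
    rw [hrow (s + 1) _ (I.min' hI) (by omega), hcol s _ (J.min' hJ) (by omega),
      hcol (s + 1) _ (J.min' hJ) (by omega)]
  · rw [hrowa, hcol p _ (J.min' hJ) (by omega), Nat.sub_self, Nat.sub_self, hc0]
    rfl

lemma gammaWeight_singleton {m n : ℕ} (T : Matrix (Fin m) (Fin n) ℝ) (i : Fin m) (j : Fin n) :
    gammaWeight T {i} {j} = T i j := by
  simp [gammaWeight]

/-! ### Γ-path sums over the first rows -/

/-- The Γ-paths from row vertex `i` to column vertex `j` all of whose turns lie in rows with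
(0-based) index `< M`, encoded as pairs of finsets as in `gammaWeight`. -/
def truncPaths (m n M : ℕ) (i : Fin m) (j : Fin n) :
    Finset (Finset (Fin m) × Finset (Fin n)) :=
  Finset.univ.filter fun P => P.1.min = (i : WithTop (Fin m)) ∧
    P.2.min = (j : WithTop (Fin n)) ∧ P.2.card = P.1.card ∧ ∀ x ∈ P.1, (x : ℕ) < M

/-- The `(i,j)` entry of the Γ-path-sum matrix restricted to paths with all turns in the first
`M` rows. -/
noncomputable def truncSum {m n : ℕ} (T : Matrix (Fin m) (Fin n) ℝ) (M : ℕ)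
    (i : Fin m) (j : Fin n) : ℝ :=
  ∑ P ∈ truncPaths m n M i j, gammaWeight T P.1 P.2

lemma mem_truncPaths {m n M : ℕ} {i : Fin m} {j : Fin n}
    {P : Finset (Fin m) × Finset (Fin n)} :
    P ∈ truncPaths m n M i j ↔ P.1.min = (i : WithTop (Fin m)) ∧
    P.2.min = (j : WithTop (Fin n)) ∧ P.2.card = P.1.card ∧ ∀ x ∈ P.1, (x : ℕ) < M := by
  simp [truncPaths]

lemma XGamma_eq_truncSum {m n : ℕ} (T : Matrix (Fin m) (Fin n) ℝ) (i : Fin m) (j : Fin n) :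
    XGamma T i j = truncSum T m i j := by
  simp only [XGamma, Matrix.of_apply, truncSum]
  rw [Finset.sum_sigma']
  refine Finset.sum_bij (fun P _ => (P.1, P.2)) ?_ ?_ ?_ ?_
  · rintro ⟨I, J⟩ h
    simp only [Finset.mem_sigma, Finset.mem_filter, Finset.mem_univ, true_and] at h
    exact mem_truncPaths.2 ⟨h.1, h.2.1, h.2.2, fun x _ => x.2⟩
  · rintro ⟨I, J⟩ _ ⟨I', J'⟩ _ h
    simp only [Prod.mk.injEq] at h
    rw [h.1, h.2]
  · rintro ⟨I, J⟩ h
    have h := mem_truncPaths.1 h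
    exact ⟨⟨I, J⟩, by simpa using ⟨h.1, h.2.1, h.2.2.1⟩, rfl⟩
  · intros; rfl

lemma truncSum_self {m n : ℕ} (T : Matrix (Fin m) (Fin n) ℝ) (i : Fin m) (j : Fin n) :
    truncSum T (i + 1) i j = T i j := by
  have : truncPaths m n (i + 1) i j = {({i}, {j})} := by
    ext ⟨I, J⟩
    rw [mem_truncPaths, Finset.mem_singleton]
    constructor
    · rintro ⟨h1, h2, h3, h4⟩
      dsimp only at h1 h2 h3 h4
      have hI : I = {i} := by
        rw [Finset.eq_singleton_iff_unique_mem]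
        refine ⟨Finset.mem_of_min h1, fun x hx => ?_⟩
        have h5 : i ≤ x := Finset.min_le_of_eq hx h1
        have h6 := h4 x hx
        apply Fin.ext
        have : (i : ℕ) ≤ x := h5
        omega
      subst hI
      obtain ⟨b, rfl⟩ := Finset.card_eq_one.1 (h3.trans (Finset.card_singleton i))
      rw [Finset.min_singleton, WithTop.coe_inj] at h2
      rw [h2]
    · intro h
      simp only [Prod.mk.injEq] at h
      obtain ⟨rfl, rfl⟩ := h
      simp
  rw [truncSum, this, Finset.sum_singleton, gammaWeight_singleton]

/-- Recursion in the number of available rows: a path with a turn in row `M` has its last turn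
there, and what precedes this turn is an arbitrary path ending in a column `j' > j`. The term
`j' = j` accounts for the paths without a turn in row `M`. -/
lemma truncSum_succ {m n : ℕ} (T : Matrix (Fin m) (Fin n) ℝ) (hT : EntrywisePos T)
    (M i : Fin m) (hi : i < M) (j : Fin n) :
    truncSum T (M + 1) i j = ∑ j' ∈ Finset.Ici j, truncSum T M i j' * ((T M j')⁻¹ * T M j) := by
  rw [← Finset.Ioi_insert, Finset.sum_insert (by simp), inv_mul_cancel₀ (hT M j).ne', mul_one]
  rw [truncSum, ← Finset.sum_filter_add_sum_filter_not _ (fun P => M ∉ P.1)]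
  congr 1
  · rw [truncSum]
    apply Finset.sum_congr _ (fun _ _ => rfl)
    ext P
    rw [Finset.mem_filter, mem_truncPaths, mem_truncPaths]
    constructor
    · rintro ⟨⟨h1, h2, h3, h4⟩, h5⟩
      refine ⟨h1, h2, h3, fun x hx => ?_⟩
      have : x ≠ M := fun h => h5 (h ▸ hx)
      have := Fin.val_ne_of_ne this
      have := h4 x hx
      omega
    · rintro ⟨h1, h2, h3, h4⟩
      refine ⟨⟨h1, h2, h3, fun x hx => ?_⟩, fun h => lt_irrefl _ (h4 M h)⟩
      have := h4 x hx
      omega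
  · simp only [truncSum, Finset.sum_mul]
    rw [Finset.sum_sigma']
    symm
    refine Finset.sum_bij (fun P _ => (insert M P.2.1, insert j P.2.2)) ?_ ?_ ?_ ?_
    · rintro ⟨j', I, J⟩ h
      simp only [Finset.mem_sigma, Finset.mem_Ioi, mem_truncPaths] at h
      obtain ⟨hj, h1, h2, h3, h4⟩ := h
      have hM : M ∉ I := fun h => lt_irrefl _ (h4 M h)
      have hjJ : j ∉ J := fun h => absurd (Finset.min_le_of_eq h h2) (not_le.2 hj)
      simp only [Finset.mem_filter, mem_truncPaths, not_not, Finset.mem_insert_self, and_true]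
      refine ⟨?_, ?_, ?_, ?_⟩
      · rw [Finset.min_insert, h1]
        exact min_eq_right (WithTop.coe_le_coe.2 hi.le)
      · rw [Finset.min_insert, h2]
        exact min_eq_left (WithTop.coe_le_coe.2 hj.le)
      · rw [Finset.card_insert_of_notMem hM, Finset.card_insert_of_notMem hjJ, h3]
      · intro x hx
        rcases Finset.mem_insert.1 hx with rfl | hx
        · omega
        · have := h4 x hx
          omega
    · rintro ⟨j', I, J⟩ h ⟨j'', I', J'⟩ h' he
      simp only [Finset.mem_sigma, Finset.mem_Ioi, mem_truncPaths] at h h'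
      simp only [Prod.mk.injEq] at he
      obtain ⟨hj, -, h2, -, h4⟩ := h
      obtain ⟨hj', -, h2', -, h4'⟩ := h'
      have hM : M ∉ I := fun h => lt_irrefl _ (h4 M h)
      have hjJ : j ∉ J := fun h => absurd (Finset.min_le_of_eq h h2) (not_le.2 hj)
      have hM' : M ∉ I' := fun h => lt_irrefl _ (h4' M h)
      have hjJ' : j ∉ J' := fun h => absurd (Finset.min_le_of_eq h h2') (not_le.2 hj')
      have e1 : I = I' := by
        rw [← Finset.erase_insert hM, he.1, Finset.erase_insert hM']
      have e2 : J = J' := by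
        rw [← Finset.erase_insert hjJ, he.2, Finset.erase_insert hjJ']
      subst e1 e2
      rw [h2, WithTop.coe_inj] at h2'
      rw [h2']
    · rintro ⟨I, J⟩ h
      simp only [Finset.mem_filter, mem_truncPaths, not_not] at h
      obtain ⟨⟨h1, h2, h3, h4⟩, hM⟩ := h
      have hjJ := Finset.mem_of_min h2
      have hcard : (J.erase j).card = (I.erase M).card := by
        rw [Finset.card_erase_of_mem hM, Finset.card_erase_of_mem hjJ, h3]
      have hiI : i ∈ I.erase M := Finset.mem_erase.2 ⟨hi.ne, Finset.mem_of_min h1⟩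
      have hJne : (J.erase j).Nonempty := by
        rw [← Finset.card_pos, hcard]
        exact Finset.card_pos.2 ⟨i, hiI⟩
      obtain ⟨j', hj'⟩ := Finset.min_of_nonempty hJne
      refine ⟨⟨j', I.erase M, J.erase j⟩, ?_, ?_⟩
      · simp only [Finset.mem_sigma, Finset.mem_Ioi, mem_truncPaths]
        have hm := Finset.mem_erase.1 (Finset.mem_of_min hj')
        refine ⟨lt_of_le_of_ne (Finset.min_le_of_eq hm.2 h2) hm.1.symm, ?_, hj', hcard, ?_⟩
        · apply le_antisymm (Finset.min_le hiI)
          rw [← h1]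
          exact Finset.min_mono (Finset.erase_subset _ _)
        · intro x hx
          obtain ⟨hx1, hx2⟩ := Finset.mem_erase.1 hx
          have := h4 x hx2
          have := Fin.val_ne_of_ne hx1
          omega
      · simp only [Finset.insert_erase hM, Finset.insert_erase hjJ]
    · rintro ⟨j', I, J⟩ h
      simp only [Finset.mem_sigma, Finset.mem_Ioi, mem_truncPaths] at h
      obtain ⟨hj, h1, h2, h3, h4⟩ := h
      exact (gammaWeight_insert T I J M j j' ⟨i, Finset.mem_of_min h1⟩ h2 h3 h4 hj).symm

/-! ### Contiguous minors -/

/-- Evaluation of contiguous minors from the column recursion. The array `x M` stands for the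
Γ-path-sum matrix of the first `M` rows of `t`, with columns `< n`. The minor is parametrised by
its lower right corner `(b, c)`, which lies in the last row or in the last column; rows and
columns are listed in decreasing order, so that the column operations act from left to right. -/
lemma det_corner (m n : ℕ) (t : ℕ → ℕ → ℝ) (x : ℕ → ℕ → ℕ → ℝ)
    (ht : ∀ i j, i < m → j < n → t i j ≠ 0)
    (h0 : ∀ M j, M < m → j < n → x (M + 1) M j = t M j)
    (h1 : ∀ M i j, M < m → i < M → j + 1 < n →
      x (M + 1) i j = x M i j + t M j / t M (j + 1) * x (M + 1) i (j + 1))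
    (h2 : ∀ M i j, M < m → i < M → j + 1 = n → x (M + 1) i j = x M i j) :
    ∀ M k b c, M ≤ m → k ≤ b → k ≤ c → b < M → c < n → (b + 1 = M ∨ c + 1 = n) →
      (Matrix.of fun s u : Fin (k + 1) => x M (b - s) (c - u)).det =
        ∏ s ∈ Finset.range (k + 1), t (b - s) (c - s) := by
  intro M
  induction M with
  | zero => intro k b c _ _ _ h; omega
  | succ M ih =>
    intro k b c hM hkb hkc hb hc hbc
    rcases Nat.lt_succ_iff_lt_or_eq.1 hb with hlt | rfl
    · have hcn : c + 1 = n := by omega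
      rw [← ih k b c (by omega) hkb hkc hlt hc (Or.inr hcn)]
      refine Matrix.det_eq_of_forall_col_eq_smul_add_pred
        (fun u : Fin k => t M (c - u - 1) / t M (c - u)) ?_ ?_
      · intro s
        simp only [Matrix.of_apply]
        exact h2 _ _ _ (by omega) (by omega) (by simpa using hcn)
      · intro s u
        have hu := u.2
        simp only [Matrix.of_apply, Fin.val_succ, Fin.val_castSucc]
        rw [show c - (↑u + 1) = c - u - 1 by omega,
          h1 M (b - s) (c - u - 1) (by omega) (by omega) (by omega),
          show c - ↑u - 1 + 1 = c - u by omega]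
    · have hdet : (Matrix.of fun s u : Fin (k + 1) => x (b + 1) (b - s) (c - u)).det =
          (Matrix.of fun s u : Fin (k + 1) => if u = 0 then x (b + 1) (b - s) c
            else if s = 0 then 0 else x b (b - s) (c - u)).det := by
        refine Matrix.det_eq_of_forall_col_eq_smul_add_pred
          (fun u : Fin k => t b (c - u - 1) / t b (c - u)) ?_ ?_
        · intro s
          simp
        · intro s u
          have hu := u.2
          simp only [Matrix.of_apply, Fin.val_succ, Fin.val_castSucc, Fin.succ_ne_zero, if_false]
          rw [show c - (↑u + 1) = c - u - 1 by omega]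
          split_ifs with hs
          · subst hs
            simp only [Fin.val_zero, Nat.sub_zero]
            rw [h0 _ _ (by omega) (by omega), h0 _ _ (by omega) (by omega), zero_add,
              div_mul_cancel₀ _ (ht _ _ (by omega) (by omega))]
          · have hs' : (s : ℕ) ≠ 0 := fun h => hs (Fin.ext h)
            rw [h1 b (b - s) (c - u - 1) (by omega) (by omega) (by omega),
              show c - ↑u - 1 + 1 = c - u by omega]
      rw [hdet, Matrix.det_succ_row_zero, Fin.sum_univ_succ, Finset.prod_range_succ']
      simp only [Matrix.of_apply, Fin.val_zero, pow_zero, one_mul, if_true, Nat.sub_zero,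
        Fin.succ_ne_zero, if_false, mul_zero, zero_mul, Finset.sum_const_zero, add_zero]
      rw [h0 _ _ (by omega) hc, mul_comm]
      congr 1
      cases k with
      | zero => simp
      | succ k =>
        rw [Finset.prod_congr rfl (g := fun s => t (b - 1 - s) (c - 1 - s))
          (fun s _ => by rw [Nat.sub_sub, Nat.sub_sub, add_comm 1 s]),
          ← ih k (b - 1) (c - 1) (by omega) (by omega) (by omega) (by omega) (by omega)
            (Or.inl (by omega))]
        congr 1
        ext s u
        simp only [Matrix.submatrix_apply, Matrix.of_apply, Fin.succAbove_zero, Fin.succ_ne_zero,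
          if_false, Fin.val_succ]
        rw [Nat.sub_sub, Nat.sub_sub, add_comm 1 (s : ℕ), add_comm 1 (u : ℕ)]

/-- The entry `T i j` for natural number indices, with the value `1` out of range. -/
noncomputable def natEntry {m n : ℕ} (T : Matrix (Fin m) (Fin n) ℝ) (i j : ℕ) : ℝ :=
  if h : i < m ∧ j < n then T ⟨i, h.1⟩ ⟨j, h.2⟩ else 1

/-- `truncSum T M i j` for natural number indices, with the value `0` out of range. -/
noncomputable def natTruncSum {m n : ℕ} (T : Matrix (Fin m) (Fin n) ℝ) (M i j : ℕ) : ℝ :=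
  if h : i < m ∧ j < n then truncSum T M ⟨i, h.1⟩ ⟨j, h.2⟩ else 0

lemma natEntry_pos {m n : ℕ} (T : Matrix (Fin m) (Fin n) ℝ) (hT : EntrywisePos T) (i j : ℕ) :
    0 < natEntry T i j := by
  unfold natEntry
  split_ifs
  · exact hT _ _
  · exact one_pos

/-- The column recursion: the sums in `truncSum_succ` for two adjacent columns are proportional
up to the term `j' = j`. -/
lemma natTruncSum_succ {m n : ℕ} (T : Matrix (Fin m) (Fin n) ℝ) (hT : EntrywisePos T)
    (M i j : ℕ) (hM : M < m) (hi : i < M) (hj : j + 1 < n) :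
    natTruncSum T (M + 1) i j = natTruncSum T M i j +
      natEntry T M j / natEntry T M (j + 1) * natTruncSum T (M + 1) i (j + 1) := by
  have hj' : j < n := by omega
  have hi' : i < m := by omega
  simp only [natTruncSum, natEntry, hM, hi', hj, hj', and_self, dif_pos]
  have e1 := truncSum_succ T hT ⟨M, hM⟩ ⟨i, hi'⟩ hi ⟨j, hj'⟩
  have e2 := truncSum_succ T hT ⟨M, hM⟩ ⟨i, hi'⟩ hi ⟨j + 1, hj⟩
  have hI : Finset.Ioi (⟨j, hj'⟩ : Fin n) = Finset.Ici ⟨j + 1, hj⟩ := by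
    ext y
    simp only [Finset.mem_Ioi, Finset.mem_Ici, Fin.lt_def, Fin.le_def]
    omega
  rw [← Finset.Ioi_insert, Finset.sum_insert (by simp), hI,
    inv_mul_cancel₀ (hT _ _).ne', mul_one] at e1
  rw [e1, e2, Finset.mul_sum]
  congr 1
  apply Finset.sum_congr rfl
  intro y _
  have := (hT ⟨M, hM⟩ ⟨j + 1, hj⟩).ne'
  field_simp

lemma natTruncSum_succ_last {m n : ℕ} (T : Matrix (Fin m) (Fin n) ℝ) (hT : EntrywisePos T)
    (M i j : ℕ) (hM : M < m) (hi : i < M) (hj : j + 1 = n) :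
    natTruncSum T (M + 1) i j = natTruncSum T M i j := by
  have hj' : j < n := by omega
  have hi' : i < m := by omega
  simp only [natTruncSum, hi', hj', and_self, dif_pos]
  have e1 := truncSum_succ T hT ⟨M, hM⟩ ⟨i, hi'⟩ hi ⟨j, hj'⟩
  have hI : Finset.Ici (⟨j, hj'⟩ : Fin n) = {⟨j, hj'⟩} := by
    ext y
    simp only [Finset.mem_Ici, Finset.mem_singleton, Fin.ext_iff, Fin.le_def]
    omega
  rw [hI, Finset.sum_singleton, inv_mul_cancel₀ (hT _ _).ne', mul_one] at e1
  exact e1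

/-- The diagonal product formula for contiguous minors; out of range both sides are `1`. -/
lemma contigMinorTL_XGamma {m n : ℕ} (T : Matrix (Fin m) (Fin n) ℝ) (hT : EntrywisePos T)
    (i j : ℕ) :
    contigMinorTL (XGamma T) (i + 1) (j + 1) =
      ∏ s ∈ Finset.range (min (m - i) (n - j)), natEntry T (i + s) (j + s) := by
  by_cases h : 1 ≤ i + 1 ∧ i + 1 ≤ m ∧ 1 ≤ j + 1 ∧ j + 1 ≤ n
  · rw [contigMinorTL, dif_pos h]
    set k := min (m - (i + 1)) (n - (j + 1)) with hk
    rw [show min (m - i) (n - j) = k + 1 by omega, ← Finset.prod_range_reflect]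
    have hd := det_corner m n (natEntry T) (natTruncSum T)
      (fun i j _ _ => (natEntry_pos T hT i j).ne')
      (fun M j hM hj => by
        simp only [natTruncSum, natEntry, hM, hj, and_self, dif_pos]
        exact truncSum_self T ⟨M, hM⟩ ⟨j, hj⟩)
      (natTruncSum_succ T hT) (natTruncSum_succ_last T hT)
      m k (i + k) (j + k) le_rfl (by omega) (by omega) (by omega) (by omega) (by omega)
    rw [← Matrix.det_submatrix_equiv_self (Fin.revPerm : Equiv.Perm (Fin (k + 1)))]
    refine Eq.trans ?_ (hd.trans ?_)
    · congr 1
      ext s u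
      have hs := s.2
      have hu := u.2
      simp only [Matrix.submatrix_apply, Matrix.of_apply, XGamma_eq_truncSum, natTruncSum,
        Fin.revPerm_apply]
      rw [dif_pos (by omega)]
      congr 1 <;> simp only [Fin.ext_iff, Fin.val_rev] <;> omega
    · apply Finset.prod_congr rfl
      intro s hs
      rw [Finset.mem_range] at hs
      congr 1 <;> omega
  · rw [contigMinorTL, dif_neg h, show min (m - i) (n - j) = 0 by omega,
      Finset.prod_range_zero]

/-- the entries of the Γ-scaffolding of `X = X_Γ(T)` are given by
`t_{ij} = det X[{i⋯},{j⋯}] / det X[{i+1⋯},{j+1⋯}]` (1-based indices). -/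
theorem scaffolding_entry_eq_minor_ratio {m n : ℕ} (T : Matrix (Fin m) (Fin n) ℝ)
    (hT : EntrywisePos T) (i : Fin m) (j : Fin n) :
    T i j = contigMinorTL (XGamma T) ((i : ℕ) + 1) ((j : ℕ) + 1) /
        contigMinorTL (XGamma T) ((i : ℕ) + 2) ((j : ℕ) + 2) := by
  have hi := i.2
  have hj := j.2
  rw [contigMinorTL_XGamma T hT i j, contigMinorTL_XGamma T hT (i + 1) (j + 1),
    show min (m - (i : ℕ)) (n - j) = min (m - (i + 1)) (n - (j + 1)) + 1 by omega,
    Finset.prod_range_succ']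
  have e : ∀ s, natEntry T (i + (s + 1)) (j + (s + 1)) = natEntry T (i + 1 + s) (j + 1 + s) :=
    fun s => by congr 1 <;> omega
  simp only [e]
  rw [mul_div_cancel_left₀ _ (Finset.prod_pos fun s _ => natEntry_pos T hT _ _).ne']
  simp [natEntry]
end

section
/- The Γ-scaffolding of a totally positive matrix is unique: if T and T′ are positive m×n real matrices with X_Γ(T) = X_Γ(T′), then T = T′. -/
/-!
The matrix `T` can be recovered from `XGamma T` by working from the last row upwards and, inside each
row, from right to left. The only one-turn Γ-path from `i` to `j` has weight `T i j`. A Γ-path with at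
least two turns has its first turn in row `i` strictly to the right of column `j`, and all other entries
entering its weight lie strictly below row `i`. Hence `XGamma T i j` is `T i j` plus a function of the
entries of `T` that come earlier in this order, and two matrices with the same path sums agree entry by
entry.
-/

open Finset

/-- In the increasing enumeration of `S`, every entry after the first exceeds the minimum of `S`. -/
lemma lt_sort_getD_of_min_eq {k : ℕ} {S : Finset (Fin k)} {a : Fin k}
    (hS : S.min = (a : WithTop (Fin k))) {s : ℕ} (h0 : 0 < s) (hs : s < S.card) (d : Fin k) :
    a < (S.sort (· ≤ ·)).getD s d := by
  have hlen : (S.sort (· ≤ ·)).length = S.card := Finset.length_sort _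
  rw [List.getD_eq_getElem _ _ (by omega)]
  have h1 : a ≤ (S.sort (· ≤ ·))[0]'(by omega) :=
    Finset.min_le_of_eq ((Finset.mem_sort (· ≤ ·)).1 (List.getElem_mem _)) hS
  exact h1.trans_lt ((Finset.sortedLT_sort S).getElem_lt_getElem_of_lt h0)

/-- The weight of a Γ-path from `i` to `j` with at least two turns involves only entries strictly
below row `i`, or in row `i` strictly to the right of column `j`. -/
lemma gammaWeight_congr_of_one_lt_card {m n : ℕ} {T T' : Matrix (Fin m) (Fin n) ℝ}
    {i : Fin m} {j : Fin n}
    (hbelow : ∀ i', i < i' → ∀ j', T i' j' = T' i' j') (hright : ∀ j', j < j' → T i j' = T' i j')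
    {I : Finset (Fin m)} {J : Finset (Fin n)} (hI : I.min = (i : WithTop (Fin m)))
    (hJ : J.min = (j : WithTop (Fin n))) (hcard : J.card = I.card) (h1 : 1 < I.card) :
    gammaWeight T I J = gammaWeight T' I J := by
  unfold gammaWeight
  split_ifs with h
  · have hlen : (I.sort (· ≤ ·)).length = I.card := Finset.length_sort _
    have hrow0 : (I.sort (· ≤ ·)).getD 0 (I.min' h.1) = i := by
      rw [List.getD_eq_getElem _ _ (by omega), Finset.sorted_zero_eq_min']
      exact WithTop.coe_injective ((Finset.coe_min' _).trans hI)
    dsimp only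
    congr 1
    · rw [hrow0]
      exact hright _ (lt_sort_getD_of_min_eq hJ (by omega) (by omega) _)
    · refine Finset.prod_congr rfl fun s hs => ?_
      have hs' := Finset.mem_range.1 hs
      have hrow := lt_sort_getD_of_min_eq hI (Nat.succ_pos s) (by omega) (I.min' h.1)
      rw [hbelow _ hrow, hbelow _ hrow]
  · rfl

lemma eq_singleton_of_min_eq {k : ℕ} {S : Finset (Fin k)} {a : Fin k}
    (hS : S.min = (a : WithTop (Fin k))) (h : S.card ≤ 1) : S = {a} :=
  Finset.eq_singleton_iff_unique_mem.2 ⟨Finset.mem_of_min hS, fun _ hx =>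
    Finset.card_le_one.1 h _ hx _ (Finset.mem_of_min hS)⟩

/-- If `T` and `T'` agree below row `i` and in row `i` to the right of column `j`, then their path sums
from `i` to `j` differ exactly by the one-turn path. -/
lemma XGamma_sub_XGamma {m n : ℕ} {T T' : Matrix (Fin m) (Fin n) ℝ} {i : Fin m} {j : Fin n}
    (hbelow : ∀ i', i < i' → ∀ j', T i' j' = T' i' j')
    (hright : ∀ j', j < j' → T i j' = T' i j') :
    XGamma T i j - XGamma T' i j = T i j - T' i j := by
  simp only [XGamma, Matrix.of_apply, ← Finset.sum_sub_distrib]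
  rw [Finset.sum_eq_single_of_mem {i} (by simp), Finset.sum_eq_single_of_mem {j} (by simp),
    gammaWeight_singleton, gammaWeight_singleton]
  · intro J hJ hne
    simp only [Finset.mem_filter, Finset.mem_univ, true_and, Finset.card_singleton] at hJ
    exact absurd (eq_singleton_of_min_eq hJ.1 hJ.2.le) hne
  · intro I hI hne
    simp only [Finset.mem_filter, Finset.mem_univ, true_and] at hI
    refine Finset.sum_eq_zero fun J hJ => ?_
    simp only [Finset.mem_filter, Finset.mem_univ, true_and] at hJ
    refine sub_eq_zero.2 (gammaWeight_congr_of_one_lt_card hbelow hright hI hJ.1 hJ.2 ?_)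
    exact not_le.1 fun hle => hne (eq_singleton_of_min_eq hI hle)

/-- the Γ-scaffolding of a totally positive matrix is unique. -/
theorem gammaScaffolding_unique {m n : ℕ} (T T' : Matrix (Fin m) (Fin n) ℝ)
    (hT : EntrywisePos T) (hT' : EntrywisePos T') (h : XGamma T = XGamma T') :
    T = T' := by
  have key : ∀ i j, T i j = T' i j := by
    intro i
    induction i using WellFoundedGT.induction with
    | ind i ihi =>
      intro j
      induction j using WellFoundedGT.induction with
      | ind j ihj =>
        have := XGamma_sub_XGamma ihi ihj
        rw [h, sub_self] at this
        exact (sub_eq_zero.1 this.symm)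
  exact Matrix.ext key
end

section
/- If T is a positive m×n real matrix, then the matrix X_L(T) is totally positive. -/
/-!
The proof is by induction on the number of rows, adding a new top row `t₀`. An L-path from a row
`i > 0` to column `j` either avoids row `0`, or arrives in row `0` from below in some column
`k < j`, turns right there (factor `t₀ₖ⁻¹`) and turns up in column `j` (factor `t₀ⱼ`). Hence, with
`X'` the path-sum matrix of the rows below, `X_L(T)` has row `0` equal to `t₀` and
`x_{i+1,j} = t₀ⱼ ∑_{k ≤ j} t₀ₖ⁻¹ x'_{ik}` (`XL_zero`, `XL_succ`).

Up to scaling the columns by positive factors, the step is therefore `Y ↦ stackOnes Y`: take partial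
sums along the rows of `Y` and put a row of ones on top. This preserves total positivity
(`totallyPositive_stackOnes`): after subtracting consecutive columns, a minor of `stackOnes Y`
becomes a determinant whose columns are sums of disjoint, consecutive, nonempty blocks of columns of
`Y`, which by multilinearity is a nonempty sum of minors of `Y` (`det_block_pos`).
-/

open Finset

/-! ### Partial sums preserve total positivity -/

/-- Merging columns of a totally positive matrix into sums over consecutive nonempty blocks `B k`
keeps its minors positive: by multilinearity the determinant is a sum of minors of `Y`, one for
each choice of a column in every block, and these columns come in increasing order. -/
lemma det_block_pos {m n r : ℕ} {Y : Matrix (Fin m) (Fin n) ℝ} (hY : TotallyPositive Y)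
    (f : Fin r → Fin m) (hf : StrictMono f) (B : Fin r → Finset (Fin n))
    (hne : ∀ k, (B k).Nonempty)
    (hlt : ∀ a b, a < b → ∀ x ∈ B a, ∀ y ∈ B b, x < y) :
    0 < (Matrix.of fun i k => ∑ c ∈ B k, Y (f i) c).det := by
  rw [← Matrix.det_transpose]
  have h := (Matrix.detRowAlternating (R := ℝ) (n := Fin r)).toMultilinearMap.map_sum_finset
    (fun _ c => fun i => Y (f i) c) B
  have h2 : (Matrix.of fun i k => ∑ c ∈ B k, Y (f i) c).transpose
      = (fun k => ∑ c ∈ B k, fun i => Y (f i) c) := by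
    ext k i
    simp [Matrix.transpose_apply, Finset.sum_apply]
  rw [h2]
  refine lt_of_lt_of_eq ?_ h.symm
  refine Finset.sum_pos ?_ ?_
  · intro s hs
    rw [Fintype.mem_piFinset] at hs
    have := hY r f s hf (fun a b hab => hlt a b hab _ (hs a) _ (hs b))
    rw [← Matrix.det_transpose] at this
    exact this
  · choose x hx using hne
    exact ⟨x, by simpa using hx⟩

lemma sum_Iic_eq {n : ℕ} {a b : Fin n} (h : a < b) (y : Fin n → ℝ) :
    ∑ c ∈ Iic b, y c = ∑ c ∈ Ioc a b, y c + 1 * ∑ c ∈ Iic a, y c := by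
  rw [one_mul, add_comm, ← Finset.sum_union]
  · congr 1
    ext x; simp; omega
  · rw [Finset.disjoint_left]
    intro x; simp; intros; omega

lemma succ_lift {m r : ℕ} (f : Fin r → Fin (m + 1)) (hf : StrictMono f) (h : ∀ k, f k ≠ 0) :
    ∃ f' : Fin r → Fin m, StrictMono f' ∧ ∀ k, f k = (f' k).succ := by
  refine ⟨fun k => (f k).pred (h k), ?_, by simp⟩
  intro a b hab
  simpa using hf hab

/-- The matrix whose row `0` consists of ones and whose row `i + 1` lists the partial sums
`∑ c ≤ b, Y i c` of row `i` of `Y`. -/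
def stackOnes {m n : ℕ} (Y : Matrix (Fin m) (Fin n) ℝ) : Matrix (Fin (m + 1)) (Fin n) ℝ :=
  Matrix.of fun a b => Fin.cases 1 (fun i => ∑ c ∈ Iic b, Y i c) a

/-- Subtracting from each selected column its predecessor turns the partial sums into sums over the
disjoint blocks `(g (k - 1), g k]`, and the row of ones into `(1, 0, …, 0)`. -/
lemma totallyPositive_stackOnes {m n : ℕ} {Y : Matrix (Fin m) (Fin n) ℝ}
    (hY : TotallyPositive Y) : TotallyPositive (stackOnes Y) := by
  intro r f g hf hg
  cases r with
  | zero => simp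
  | succ r =>
    have hg' : ∀ k : Fin r, g k.castSucc < g k.succ := fun k => hg (by simp)
    have hgle : ∀ a b, a ≤ b → g a ≤ g b := fun a b => hg.monotone.imp
    -- Either the minor uses the row of ones, and expanding along it leaves the blocks after the
    -- first column, or it only uses rows of partial sums.
    by_cases h0 : f 0 = 0
    · obtain ⟨f', hf', hff⟩ := succ_lift (fun k : Fin r => f k.succ)
        (fun a b hab => hf (by simpa using hab))
        (fun k => ne_of_gt (h0 ▸ hf (Fin.succ_pos k)))
      rw [Matrix.det_eq_of_forall_col_eq_smul_add_pred
        (B := Matrix.of fun i => Fin.cons (stackOnes Y (f i) (g 0))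
          (fun k : Fin r => Fin.cases (0 : ℝ)
            (fun i' => ∑ c ∈ Ioc (g k.castSucc) (g k.succ), Y i' c) (f i))) (fun _ => 1)
        (by simp)]
      · rw [Matrix.det_succ_row_zero, Fin.sum_univ_succ, Finset.sum_eq_zero]
        · have := det_block_pos hY f' hf' (fun k => Ioc (g k.castSucc) (g k.succ))
            (fun k => ⟨g k.succ, by simpa using hg' k⟩)
            (fun a b hab x hx y hy => by
              simp only [mem_Ioc] at hx hy
              have := hgle a.succ b.castSucc (by rw [Fin.le_def]; simpa using hab)
              omega)
          convert this using 1
          simp [h0, stackOnes]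
          congr 1
          ext i k
          simp [hff]
        · intro k _
          simp [h0]
      · intro i j
        simp only [Matrix.submatrix_apply, stackOnes, Matrix.of_apply, Fin.cons_succ]
        cases f i using Fin.cases with
        | zero => simp
        | succ i => exact sum_Iic_eq (hg' j) _
    · obtain ⟨f', hf', hff⟩ := succ_lift f hf
        (fun k => ne_of_gt (lt_of_lt_of_le (Fin.pos_of_ne_zero h0) (hf.monotone (Fin.zero_le k))))
      rw [Matrix.det_eq_of_forall_col_eq_smul_add_pred
        (B := Matrix.of fun i k => ∑ c ∈ (Fin.cons (Iic (g 0))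
          (fun k : Fin r => Ioc (g k.castSucc) (g k.succ)) : Fin (r+1) → Finset (Fin n)) k,
            Y (f' i) c) (fun _ => 1)
        (by simp [hff, stackOnes])]
      · refine det_block_pos hY f' hf' _ ?_ ?_
        · intro k
          cases k using Fin.cases with
          | zero => exact ⟨g 0, by simp⟩
          | succ k => exact ⟨g k.succ, by simpa using hg' k⟩
        · intro a b hab x hx y hy
          cases b using Fin.cases with
          | zero => simp at hab
          | succ b =>
            have := hgle a b.castSucc (by rw [Fin.le_def]; rw [Fin.lt_def] at hab; simp at *; omega)
            cases a using Fin.cases with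
            | zero => simp at hx hy; omega
            | succ a => simp at hx hy; omega
      · intro i j
        simp only [Matrix.submatrix_apply, stackOnes, Matrix.of_apply, Fin.cons_succ, hff,
          Fin.cases_succ]
        exact sum_Iic_eq (hg' j) _

lemma TotallyPositive.mul_cols {m n : ℕ} {Y : Matrix (Fin m) (Fin n) ℝ}
    (hY : TotallyPositive Y) (d : Fin n → ℝ) (hd : ∀ j, 0 < d j) :
    TotallyPositive (Matrix.of fun i j => d j * Y i j) := by
  intro r f g hf hg
  have := Matrix.det_mul_row (fun k => d (g k)) (Y.submatrix f g)
  refine lt_of_lt_of_eq ?_ this.symm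
  exact mul_pos (Finset.prod_pos fun _ _ => hd _) (hY r f g hf hg)


/-! ### Weights of L-paths when a top row is added -/

lemma getD_congr {α : Type*} (l : List α) {s : ℕ} (hs : s < l.length) (d e : α) :
    l.getD s d = l.getD s e := by
  rw [List.getD_eq_getElem _ _ hs, List.getD_eq_getElem _ _ hs]

/-- The weight in terms of the sorted lists of rows and columns, with arbitrary default values: all
the indices that occur are in range. -/
lemma lWeight_eq {m n : ℕ} (T : Matrix (Fin m) (Fin n) ℝ) (I : Finset (Fin m))
    (J : Finset (Fin n)) (p : ℕ) (hI : I.card = p + 1) (hJ : J.card = p + 1)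
    (la : List (Fin m)) (lb : List (Fin n)) (ha : I.sort (· ≤ ·) = la)
    (hb : J.sort (· ≤ ·) = lb) (d : Fin m) (e : Fin n) :
    lWeight T I J = T (la.getD p d) (lb.getD 0 e) *
      ∏ s ∈ Finset.range p, ((T (la.getD (p - 1 - s) d) (lb.getD s e))⁻¹ *
        T (la.getD (p - 1 - s) d) (lb.getD (s + 1) e)) := by
  have hla : la.length = p + 1 := by rw [← ha, Finset.length_sort, hI]
  have hlb : lb.length = p + 1 := by rw [← hb, Finset.length_sort, hJ]
  have h : I.Nonempty ∧ J.Nonempty ∧ I.card = J.card :=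
    ⟨Finset.card_pos.1 (by omega), Finset.card_pos.1 (by omega), by omega⟩
  rw [lWeight, dif_pos h]
  simp only [hI, ha, hb, Nat.add_sub_cancel, Nat.sub_zero]
  rw [getD_congr la (by omega) _ d, getD_congr lb (by omega) _ e]
  congr 1
  refine Finset.prod_congr rfl fun s hs => ?_
  rw [Finset.mem_range] at hs
  rw [getD_congr la (by omega) _ d, getD_congr lb (s := s) (by omega) _ e,
    getD_congr lb (s := s + 1) (by omega) _ e, show p - (s + 1) = p - 1 - s by omega]

lemma sort_map_succ {m : ℕ} (I : Finset (Fin m)) :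
    (I.map (Fin.succEmb m)).sort (· ≤ ·) = (I.sort (· ≤ ·)).map Fin.succ := by
  symm
  exact Finset.map_sort (r := (· ≤ ·)) (r' := (· ≤ ·)) (Fin.succEmb m) I (by simp)

lemma sort_insert_zero {m : ℕ} (I : Finset (Fin m)) :
    (insert 0 (I.map (Fin.succEmb m))).sort (· ≤ ·) = 0 :: (I.sort (· ≤ ·)).map Fin.succ := by
  rw [Finset.sort_insert, sort_map_succ]
  · simp
  · simp

lemma sort_insert_last {n : ℕ} (J : Finset (Fin n)) (j : Fin n) (h : ∀ x ∈ J, x < j) :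
    (insert j J).sort (· ≤ ·) = J.sort (· ≤ ·) ++ [j] := by
  have hn : (J.sort (· ≤ ·) ++ [j]).Nodup := by
    rw [List.nodup_append]
    simp [Finset.sort_nodup]
    exact fun hj => lt_irrefl _ (h j hj)
  have h1 := (List.toFinset_sort (· ≤ ·) hn).2 (by
    rw [List.pairwise_append]
    simp [Finset.pairwise_sort]
    exact fun a ha => (h a ha).le)
  rw [← h1]
  congr 1
  ext x
  simp

/-- An L-path that avoids row `0` has the same weight in the matrix with row `0` deleted. -/
lemma lWeight_map {m n : ℕ} (T : Matrix (Fin (m + 1)) (Fin n) ℝ) (I : Finset (Fin m))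
    (J : Finset (Fin n)) (hI : I.Nonempty) (hIJ : J.card = I.card) :
    lWeight T (I.map (Fin.succEmb m)) J = lWeight (T.submatrix Fin.succ id) I J := by
  obtain ⟨p, hp⟩ := Nat.exists_eq_succ_of_ne_zero (Finset.card_pos.2 hI).ne'
  obtain ⟨d, hd⟩ := hI
  obtain ⟨e, he⟩ : J.Nonempty := Finset.card_pos.1 (by omega)
  rw [lWeight_eq T _ J p (by simpa using hp) (by omega) _ _ (sort_map_succ I) rfl d.succ e,
    lWeight_eq _ I J p hp (by omega) _ _ rfl rfl d e]
  simp only [List.getD_map, Matrix.submatrix_apply, id]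

lemma getD_last_of_max {n : ℕ} (J : Finset (Fin n)) (k : Fin n) (p : ℕ) (hp : J.card = p + 1)
    (hk : J.max = (k : WithBot (Fin n))) (e : Fin n) : (J.sort (· ≤ ·)).getD p e = k := by
  have hne : J.Nonempty := ⟨k, Finset.mem_of_max hk⟩
  have h1 : J.max' hne = k := by
    rw [← WithBot.coe_inj, Finset.coe_max', hk]
  rw [List.getD_eq_getElem _ _ (by rw [Finset.length_sort]; omega), ← h1,
    Finset.max'_eq_sorted_last]
  congr 1
  rw [Finset.length_sort]; omega

/-- An L-path that makes its last L-turn at `(0, j)` is an L-path to some column `k < j` in the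
matrix with row `0` deleted, followed by a turn right at `(0, k)` and a turn up at `(0, j)`. -/
lemma lWeight_insert {m n : ℕ} (T : Matrix (Fin (m + 1)) (Fin n) ℝ) (I : Finset (Fin m))
    (J : Finset (Fin n)) (hI : I.Nonempty) (hIJ : J.card = I.card) (j k : Fin n)
    (hk : J.max = (k : WithBot (Fin n))) (hkj : k < j) :
    lWeight T (insert 0 (I.map (Fin.succEmb m))) (insert j J) =
      T 0 j * ((T 0 k)⁻¹ * lWeight (T.submatrix Fin.succ id) I J) := by
  obtain ⟨p, hp⟩ := Nat.exists_eq_succ_of_ne_zero (Finset.card_pos.2 hI).ne'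
  obtain ⟨d, hd⟩ := hI
  have hlt : ∀ x ∈ J, x < j := fun x hx =>
    lt_of_le_of_lt (WithBot.coe_le_coe.1 (hk ▸ Finset.le_max hx)) hkj
  have hjJ : j ∉ J := fun h => lt_irrefl _ (hlt j h)
  have hla : (I.sort (· ≤ ·)).length = p + 1 := by rw [Finset.length_sort, hp]
  have hlb : (J.sort (· ≤ ·)).length = p + 1 := by rw [Finset.length_sort]; omega
  rw [lWeight_eq T _ _ (p + 1)
    (by rw [Finset.card_insert_of_notMem (by simp), Finset.card_map, hp])
    (by rw [Finset.card_insert_of_notMem hjJ]; omega) _ _ (sort_insert_zero I)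
    (sort_insert_last J j hlt) d.succ k,
    lWeight_eq _ I J p hp (by omega) _ _ rfl rfl d k, Finset.prod_range_succ]
  have e1 : (J.sort (· ≤ ·) ++ [j]).getD (p + 1) k = j := by
    rw [List.getD_append_right _ _ _ _ (by omega), hlb]; simp
  have e2 : ∀ s < p + 1, (J.sort (· ≤ ·) ++ [j]).getD s k = (J.sort (· ≤ ·)).getD s k :=
    fun s hs => List.getD_append _ _ _ _ (by omega)
  rw [e1, e2 p (by omega), e2 0 (by omega), getD_last_of_max J k p (by omega) hk]
  rw [Finset.prod_congr rfl (g := fun s => ((T ((I.sort (· ≤ ·)).getD (p - 1 - s) d).succ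
    ((J.sort (· ≤ ·)).getD s k))⁻¹ * T ((I.sort (· ≤ ·)).getD (p - 1 - s) d).succ
    ((J.sort (· ≤ ·)).getD (s + 1) k)))]
  · simp only [List.getD_map, Matrix.submatrix_apply, id, List.getD_cons_succ]
    simp
    ring
  · intro s hs
    rw [Finset.mem_range] at hs
    rw [e2 s (by omega), e2 (s + 1) (by omega),
      show p + 1 - 1 - s = (p - 1 - s) + 1 by omega, List.getD_cons_succ, List.getD_map]

/-! ### Recursion for the path-sum matrix -/

lemma max_eq_coe_iff {α : Type*} [LinearOrder α] (s : Finset α) (a : α) :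
    s.max = (a : WithBot α) ↔ a ∈ s ∧ ∀ x ∈ s, x ≤ a := by
  constructor
  · intro h
    exact ⟨Finset.mem_of_max h, fun x hx => WithBot.coe_le_coe.1 (h ▸ Finset.le_max hx)⟩
  · rintro ⟨h1, h2⟩
    exact le_antisymm (Finset.max_le fun x hx => WithBot.coe_le_coe.2 (h2 x hx))
      (Finset.le_max h1)

/-- A subset of `Fin (m + 1)` with maximum `i + 1` is a shifted subset of `Fin m` with
maximum `i`, with or without the extra element `0`. -/
lemma sum_max_succ {m : ℕ} (i : Fin m) (F : Finset (Fin (m + 1)) → ℝ) :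
    ∑ I ∈ Finset.univ.filter (fun I : Finset (Fin (m + 1)) =>
        I.max = (i.succ : WithBot (Fin (m + 1)))), F I =
      ∑ I ∈ Finset.univ.filter (fun I : Finset (Fin m) => I.max = (i : WithBot (Fin m))),
        (F (I.map (Fin.succEmb m)) + F (insert 0 (I.map (Fin.succEmb m)))) := by
  have key : ∀ I : Finset (Fin (m + 1)), (0 : Fin (m + 1)) ∉ I →
      (Finset.univ.filter fun x : Fin m => x.succ ∈ I).map (Fin.succEmb m) = I := by
    intro I h0
    ext x
    cases x using Fin.cases with
    | zero => simp [h0]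
    | succ x => simp
  rw [← Finset.sum_filter_not_add_sum_filter _ (fun I => (0 : Fin (m + 1)) ∈ I),
    Finset.sum_add_distrib]
  congr 1
  · refine Finset.sum_nbij' (fun I => Finset.univ.filter fun x : Fin m => x.succ ∈ I)
      (fun I => I.map (Fin.succEmb m)) ?_ ?_ ?_ ?_ ?_
    · intro I hI
      simp only [mem_filter, mem_univ, true_and, max_eq_coe_iff] at hI ⊢
      exact ⟨hI.1.1, fun x hx => by simpa using hI.1.2 _ hx⟩
    · intro I hI
      simp only [mem_filter, mem_univ, true_and, max_eq_coe_iff] at hI ⊢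
      simpa using hI
    · intro I hI
      exact key I (Finset.mem_filter.1 hI).2
    · intro I hI
      ext x; simp
    · intro I hI
      rw [key I (Finset.mem_filter.1 hI).2]
  · have key' : ∀ I : Finset (Fin (m + 1)), (0 : Fin (m + 1)) ∈ I →
        insert 0 ((Finset.univ.filter fun x : Fin m => x.succ ∈ I).map (Fin.succEmb m)) = I := by
      intro I h0
      ext x
      cases x using Fin.cases with
      | zero => simp [h0]
      | succ x => simp
    refine Finset.sum_nbij' (fun I => Finset.univ.filter fun x : Fin m => x.succ ∈ I)
      (fun I => insert 0 (I.map (Fin.succEmb m))) ?_ ?_ ?_ ?_ ?_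
    · intro I hI
      simp only [mem_filter, mem_univ, true_and, max_eq_coe_iff] at hI ⊢
      exact ⟨hI.1.1, fun x hx => by simpa using hI.1.2 _ hx⟩
    · intro I hI
      simp only [mem_filter, mem_univ, true_and, max_eq_coe_iff] at hI ⊢
      simpa using hI
    · intro I hI
      exact key' I (Finset.mem_filter.1 hI).2
    · intro I hI
      ext x; simp
    · intro I hI
      rw [key' I (Finset.mem_filter.1 hI).2]

/-- Deleting the maximum `j` from a set with at least two elements leaves a nonempty set whose
maximum `k` is smaller than `j`. -/
lemma sum_max_insert {n : ℕ} (j : Fin n) (p : ℕ) (hp : p ≠ 0) (F : Finset (Fin n) → ℝ) :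
    ∑ J ∈ Finset.univ.filter (fun J : Finset (Fin n) =>
        J.max = (j : WithBot (Fin n)) ∧ J.card = p + 1), F J =
      ∑ k ∈ Iio j, ∑ J ∈ Finset.univ.filter (fun J : Finset (Fin n) =>
        J.max = (k : WithBot (Fin n)) ∧ J.card = p), F (insert j J) := by
  rw [Finset.sum_sigma']
  have hmem : ∀ x : (_ : Fin n) × Finset (Fin n), x ∈ (Iio j).sigma (fun k =>
      Finset.univ.filter (fun J : Finset (Fin n) =>
        J.max = (k : WithBot (Fin n)) ∧ J.card = p)) ↔
      x.1 < j ∧ (x.1 ∈ x.2 ∧ ∀ y ∈ x.2, y ≤ x.1) ∧ x.2.card = p := by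
    intro x
    simp [max_eq_coe_iff]
  have hnot : ∀ x : (_ : Fin n) × Finset (Fin n),
      x.1 < j ∧ (x.1 ∈ x.2 ∧ ∀ y ∈ x.2, y ≤ x.1) ∧ x.2.card = p → j ∉ x.2 :=
    fun x hx hj => absurd (hx.2.1.2 j hj) (not_le.2 hx.1)
  symm
  refine Finset.sum_nbij (fun x => insert j x.2) ?_ ?_ ?_ ?_
  · intro x hx
    rw [hmem] at hx
    simp only [mem_filter, mem_univ, true_and, max_eq_coe_iff]
    refine ⟨⟨by simp, fun y hy => ?_⟩, ?_⟩
    · rcases Finset.mem_insert.1 hy with rfl | hy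
      · exact le_rfl
      · exact (hx.2.1.2 y hy).trans hx.1.le
    · rw [Finset.card_insert_of_notMem (hnot x hx), hx.2.2]
  · intro x hx y hy hxy
    rw [Finset.mem_coe, hmem] at hx hy
    have h2 : x.2 = y.2 := by
      rw [← Finset.erase_insert (hnot x hx), ← Finset.erase_insert (hnot y hy)]
      exact congrArg (fun s => s.erase j) hxy
    have h1 : x.1 = y.1 := le_antisymm (hy.2.1.2 _ (h2 ▸ hx.2.1.1)) (hx.2.1.2 _ (h2 ▸ hy.2.1.1))
    exact Sigma.ext h1 (heq_of_eq h2)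
  · intro J hJ
    rw [Finset.mem_coe, Finset.mem_filter, max_eq_coe_iff] at hJ
    obtain ⟨-, ⟨hj, hmax⟩, hc⟩ := hJ
    have hc' : (J.erase j).card = p := by rw [Finset.card_erase_of_mem hj, hc]; rfl
    have hne : (J.erase j).Nonempty := Finset.card_pos.1 (by omega)
    refine ⟨⟨(J.erase j).max' hne, J.erase j⟩, ?_, Finset.insert_erase hj⟩
    rw [Finset.mem_coe, hmem]
    have hm := Finset.max'_mem _ hne
    refine ⟨lt_of_le_of_ne (hmax _ (Finset.mem_of_mem_erase hm)) (Finset.ne_of_mem_erase hm),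
      ⟨hm, fun y hy => Finset.le_max' _ y hy⟩, hc'⟩
  · intro x _
    rfl

/-- The only L-path starting at row `0` has the single turn `(0, j)`. -/
lemma XL_zero {m n : ℕ} (T : Matrix (Fin (m + 1)) (Fin n) ℝ) (j : Fin n) :
    XL T 0 j = T 0 j := by
  have h1 : Finset.univ.filter (fun I : Finset (Fin (m + 1)) =>
      I.max = ((0 : Fin (m + 1)) : WithBot (Fin (m + 1)))) = {{0}} := by
    ext I
    simp only [mem_filter, mem_univ, true_and, mem_singleton]
    constructor
    · intro h
      ext x
      rw [Finset.mem_singleton]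
      constructor
      · intro hx
        have := WithBot.coe_le_coe.1 (h ▸ Finset.le_max hx)
        exact Fin.le_zero_iff.1 this
      · rintro rfl
        exact Finset.mem_of_max h
    · rintro rfl; simp
  have h2 : Finset.univ.filter (fun J : Finset (Fin n) =>
      J.max = (j : WithBot (Fin n)) ∧ J.card = ({0} : Finset (Fin (m + 1))).card) = {{j}} := by
    ext J
    simp only [mem_filter, mem_univ, true_and, mem_singleton, card_singleton]
    constructor
    · rintro ⟨h, hc⟩
      obtain ⟨a, rfl⟩ := Finset.card_eq_one.1 hc
      simpa using h
    · rintro rfl; simp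
  rw [XL, Matrix.of_apply, h1, Finset.sum_singleton, h2, Finset.sum_singleton,
    lWeight_eq T _ _ 0 (by simp) (by simp) _ _ rfl rfl 0 j]
  simp

/-- The recursion on the number of rows: row `0` acts on the path sums of the other rows by
`x ↦ (t₀ⱼ ∑_{k ≤ j} t₀ₖ⁻¹ xₖ)ⱼ`. The term `k = j` accounts for the paths that avoid row `0`. -/
lemma XL_succ {m n : ℕ} (T : Matrix (Fin (m + 1)) (Fin n) ℝ) (hT : EntrywisePos T)
    (i : Fin m) (j : Fin n) :
    XL T i.succ j = T 0 j * ∑ k ∈ Iic j, (T 0 k)⁻¹ * XL (T.submatrix Fin.succ id) i k := by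
  have hj : XL (T.submatrix Fin.succ id) i j =
      T 0 j * ((T 0 j)⁻¹ * XL (T.submatrix Fin.succ id) i j) := by
    rw [mul_inv_cancel_left₀ (hT 0 j).ne']
  rw [← Finset.Iio_insert, Finset.sum_insert (by simp), mul_add, ← hj]
  conv_lhs => rw [XL, Matrix.of_apply, sum_max_succ, Finset.sum_add_distrib]
  congr 1
  · rw [XL, Matrix.of_apply]
    refine Finset.sum_congr rfl fun I hI => ?_
    rw [Finset.card_map]
    refine Finset.sum_congr rfl fun J hJ => ?_
    simp only [mem_filter, mem_univ, true_and] at hI hJ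
    exact lWeight_map T I J ⟨i, Finset.mem_of_max hI⟩ hJ.2
  · simp only [XL, Matrix.of_apply, Finset.mul_sum]
    rw [Finset.sum_comm]
    refine Finset.sum_congr rfl fun I hI => ?_
    simp only [mem_filter, mem_univ, true_and] at hI
    have hne : I.Nonempty := ⟨i, Finset.mem_of_max hI⟩
    rw [Finset.card_insert_of_notMem (by simp), Finset.card_map,
      sum_max_insert j _ (Finset.card_pos.2 hne).ne']
    refine Finset.sum_congr rfl fun k hk => Finset.sum_congr rfl fun J hJ => ?_
    simp only [mem_filter, mem_univ, true_and] at hJ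
    exact lWeight_insert T I J hne hJ.2 j k hJ.1 (by simpa using hk)

/-- If `T` is a positive matrix then `X_L(T)` is totally positive. -/
theorem xL_totallyPositive {m n : ℕ} (T : Matrix (Fin m) (Fin n) ℝ)
    (hT : EntrywisePos T) : TotallyPositive (XL T) := by
  induction m with
  | zero =>
    intro r f g _ _
    cases r with
    | zero => simp
    | succ r => exact (f 0).elim0
  | succ m ih =>
    have h1 := ih (T.submatrix Fin.succ id) (fun i j => hT i.succ j)
    have h2 := h1.mul_cols (fun k => (T 0 k)⁻¹) (fun k => inv_pos.2 (hT 0 k))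
    have h3 := (totallyPositive_stackOnes h2).mul_cols (T 0) (hT 0)
    convert h3
    ext i j
    cases i using Fin.cases with
    | zero => simp [stackOnes, XL_zero]
    | succ i => simp [stackOnes, XL_succ T hT]
end
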